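/- There exists a binary self-dual code of length 68 and minimum (nonzero) weight 12 that has exactly 1274 codewords of weight 12 and exactly 13296 codewords of weight 14 (i.e. a self-dual [68,34,12] code with weight enumerator W_{68,2} with γ = 0 and β = 208). -/

import Mathlib

/-- The dual of a code (submodule of `ι → R`) with respect to the standard bilinear form. -/
def dualCode {R : Type*} [CommRing R] {ι : Type*} [Fintype ι]
    (C : Submodule R (ι → R)) : Submodule R (ι → R) where
  carrier := {x | ∀ c ∈ C, ∑ i, x i * c i = 0}
  add_mem' := by
    intro a b ha hb c hc
    simp only [Set.mem_setOf_eq] at ha hb ⊢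
    simp [Pi.add_apply, add_mul, Finset.sum_add_distrib, ha c hc, hb c hc]
  zero_mem' := by
    intro c hc
    simp
  smul_mem' := by
    intro r a ha c hc
    simp only [Set.mem_setOf_eq] at ha ⊢
    simp [Pi.smul_apply, smul_eq_mul, mul_assoc, ← Finset.mul_sum, ha c hc]

/-- A code is self-dual if it equals its dual. -/
def IsSelfDual {R : Type*} [CommRing R] {ι : Type*} [Fintype ι]
    (C : Submodule R (ι → R)) : Prop :=
  C = dualCode C

/-!
The code is generated by `[1 | M]` with `M = C (1 + w wᵀ)`, where `C` is an orthogonal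
four-circulant matrix and `w` a vector with `w ⬝ᵥ w = 0`; then `M` is orthogonal, which makes the
code self-dual.

Its codewords are `(x, x M)`. One half of a codeword of weight at most `14` has weight at most `7`,
and since `M⁻¹ = Mᵀ` either half determines the other, so the codewords of such a weight are counted
by the sums of at most `7` rows of `M` and of `Mᵀ`. To make this enumeration feasible for the
kernel, the sums are bit-sliced: the values of one coordinate in all sums of `k` rows are packed
into one large number, and the weights of all these sums are computed together by a few operations
on such numbers.
-/

open Matrix Finset

section SystematicCode

variable {R : Type*} [CommRing R] {m n : ℕ}

/-- The linear code with generator matrix `[1 | A]`. -/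
def systematicCode (A : Matrix (Fin m) (Fin n) R) : Submodule R (Fin (m + n) → R) :=
  LinearMap.range
    (LinearMap.funLeft R R finSumFinEquiv.symm ∘ₗ (Matrix.fromCols 1 A).vecMulLinear)

theorem mem_systematicCode {A : Matrix (Fin m) (Fin n) R} {v : Fin (m + n) → R} :
    v ∈ systematicCode A ↔ ∃ x, Fin.append x (x ᵥ* A) = v := by
  refine LinearMap.mem_range.trans (exists_congr fun x => ?_)
  suffices Sum.elim x (x ᵥ* A) ∘ finSumFinEquiv.symm = Fin.append x (x ᵥ* A) by
    rw [← this, LinearMap.comp_apply, Matrix.vecMulLinear_apply, vecMul_fromCols, vecMul_one]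
    rfl
  rw [Equiv.comp_symm_eq]
  ext (i | i) <;> simp only [Sum.elim_inl, Sum.elim_inr, Function.comp_apply,
    finSumFinEquiv_apply_left, finSumFinEquiv_apply_right, Fin.append_left, Fin.append_right]

theorem append_mem_systematicCode {A : Matrix (Fin m) (Fin n) R} {x : Fin m → R} {y : Fin n → R} :
    Fin.append x y ∈ systematicCode A ↔ y = x ᵥ* A := by
  rw [mem_systematicCode]
  constructor
  · rintro ⟨u, hu⟩
    obtain ⟨rfl, rfl⟩ := Prod.ext_iff.1 ((Fin.appendEquiv m n).injective (a₁ := (u, u ᵥ* A))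
      (a₂ := (x, y)) hu)
    rfl
  · rintro rfl
    exact ⟨x, rfl⟩

theorem append_mem_dualCode_systematicCode {A : Matrix (Fin m) (Fin n) R} {x : Fin m → R}
    {y : Fin n → R} :
    Fin.append x y ∈ dualCode (systematicCode A) ↔ x = -(A *ᵥ y) := by
  have hsum (u : Fin m → R) :
      ∑ i, Fin.append x y i * Fin.append u (u ᵥ* A) i = (x + A *ᵥ y) ⬝ᵥ u := by
    rw [add_dotProduct, dotProduct_comm (A *ᵥ y), dotProduct_mulVec, dotProduct_comm (u ᵥ* A),
      Fin.sum_univ_add]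
    simp only [Fin.append_left, Fin.append_right, dotProduct]
  calc Fin.append x y ∈ dualCode (systematicCode A)
      ↔ ∀ u : Fin m → R, (x + A *ᵥ y) ⬝ᵥ u = 0 := by
        simp only [← hsum]
        exact ⟨fun h u => h _ (mem_systematicCode.2 ⟨u, rfl⟩), fun h c hc => by
          obtain ⟨u, rfl⟩ := mem_systematicCode.1 hc
          exact h u⟩
    _ ↔ x = -(A *ᵥ y) := by rw [dotProduct_eq_zero_iff, eq_neg_iff_add_eq_zero]

theorem isSelfDual_systematicCode {A : Matrix (Fin n) (Fin n) R} (hA : A * Aᵀ = -1) :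
    IsSelfDual (systematicCode A) := by
  have hA' : Aᵀ * A = -1 := by
    rw [← neg_eq_iff_eq_neg, ← mul_neg, mul_eq_one_comm, neg_mul, hA, neg_neg]
  ext v
  rw [← Fin.append_castAdd_natAdd (f := v), append_mem_systematicCode,
    append_mem_dualCode_systematicCode]
  constructor
  · intro h
    rw [h, ← mulVec_transpose, mulVec_mulVec, hA, neg_mulVec, one_mulVec, neg_neg]
  · intro h
    rw [h, ← mulVec_transpose, mulVec_neg, mulVec_mulVec, hA', neg_mulVec, one_mulVec, neg_neg]

theorem hammingNorm_append [DecidableEq R] (x : Fin m → R) (y : Fin n → R) :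
    hammingNorm (Fin.append x y) = hammingNorm x + hammingNorm y := by
  simp only [hammingNorm, card_filter, Fin.sum_univ_add, Fin.append_left, Fin.append_right]

variable [Fintype R] [DecidableEq R]

/-- The number of codewords of the systematic code of `A` with weight `k` on the information
coordinates and weight `l` on the check coordinates. -/
def splitWeightCount (A : Matrix (Fin m) (Fin n) R) (k l : ℕ) : ℕ :=
  #{x : Fin m → R | hammingNorm x = k ∧ hammingNorm (x ᵥ* A) = l}

theorem splitWeightCount_comm {A B : Matrix (Fin n) (Fin n) R} (hAB : A * B = 1) (k l : ℕ) :
    splitWeightCount A k l = splitWeightCount B l k := by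
  have hBA : B * A = 1 := mul_eq_one_comm.1 hAB
  refine card_nbij' (· ᵥ* A) (· ᵥ* B) ?_ ?_ ?_ ?_ <;>
    simp +contextual [Set.MapsTo, Set.LeftInvOn, vecMul_vecMul, hAB, hBA]

theorem ncard_systematicCode_hammingNorm_eq (A : Matrix (Fin m) (Fin n) R) (s : ℕ) :
    {v | v ∈ systematicCode A ∧ hammingNorm v = s}.ncard =
      ∑ p ∈ antidiagonal s, splitWeightCount A p.1 p.2 := by
  have himage : {v | v ∈ systematicCode A ∧ hammingNorm v = s} =
      (fun x => Fin.append x (x ᵥ* A)) ''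
        ({x | hammingNorm x + hammingNorm (x ᵥ* A) = s} : Finset (Fin m → R)) := by
    ext v
    simp only [mem_systematicCode, Set.mem_ofPred_eq, Set.mem_image, coe_filter, mem_univ, true_and]
    constructor
    · rintro ⟨⟨x, rfl⟩, hx⟩
      exact ⟨x, (hammingNorm_append _ _).symm.trans hx, rfl⟩
    · rintro ⟨x, hx, rfl⟩
      exact ⟨⟨x, rfl⟩, (hammingNorm_append _ _).trans hx⟩
  have hinj : Function.Injective fun x : Fin m → R => Fin.append x (x ᵥ* A) := fun x x' h =>
    congrArg Prod.fst ((Fin.appendEquiv m n).injective (a₁ := (x, x ᵥ* A)) (a₂ := (x', x' ᵥ* A)) h)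
  rw [himage, Set.ncard_image_of_injective _ hinj, Set.ncard_coe_finset,
    card_eq_sum_card_fiberwise (f := fun x => (hammingNorm x, hammingNorm (x ᵥ* A)))
      (t := antidiagonal s) fun x hx => by simpa using hx]
  refine sum_congr rfl fun p hp => congrArg card ?_
  ext x
  simp only [mem_filter, mem_univ, true_and, Prod.ext_iff, and_iff_right_iff_imp]
  rintro ⟨hk, hl⟩
  rw [hk, hl, mem_antidiagonal.1 hp]

end SystematicCode

theorem sum_antidiagonal_eq_sum_range_add_sum_range {M : Type*} [AddCommMonoid M]
    (f : ℕ → ℕ → M) (s : ℕ) :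
    ∑ p ∈ antidiagonal s, f p.1 p.2 =
      ∑ k ∈ range (s / 2 + 1), f k (s - k) + ∑ k ∈ range ((s + 1) / 2), f (s - k) k := by
  have hs : s.succ = s / 2 + 1 + (s + 1) / 2 := by omega
  rw [Finset.Nat.sum_antidiagonal_eq_sum_range_succ f, hs, sum_range_add _ (s / 2 + 1),
    ← sum_range_reflect (fun k => f (s - k) k) ((s + 1) / 2)]
  refine congrArg _ (sum_congr rfl fun k hk => ?_)
  rw [mem_range] at hk
  congr 1 <;> omega

theorem ncard_systematicCode_hammingNorm_eq_of_mul_eq_one {R : Type*} [CommRing R] [Fintype R]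
    [DecidableEq R] {n : ℕ} {A B : Matrix (Fin n) (Fin n) R} (hAB : A * B = 1) (s : ℕ) :
    {v | v ∈ systematicCode A ∧ hammingNorm v = s}.ncard =
      ∑ k ∈ range (s / 2 + 1), splitWeightCount A k (s - k) +
        ∑ k ∈ range ((s + 1) / 2), splitWeightCount B k (s - k) := by
  rw [ncard_systematicCode_hammingNorm_eq, sum_antidiagonal_eq_sum_range_add_sum_range]
  simp only [splitWeightCount_comm hAB (s - _)]

section OrthogonalMatrix

variable {R : Type*} [CommRing R]

/-- The four-circulant matrix `[A B; -Bᵀ Aᵀ]`, where `A` and `B` are the circulant matrices of `a`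
and `b`. -/
def fourCirculant {G : Type*} [AddCommGroup G] (a b : G → R) : Matrix (G ⊕ G) (G ⊕ G) R :=
  fromBlocks (circulant a) (circulant b) (-(circulant b)ᵀ) (circulant a)ᵀ

theorem fourCirculant_mul_transpose {G : Type*} [AddCommGroup G] [Fintype G] (a b : G → R) :
    fourCirculant a b * (fourCirculant a b)ᵀ =
      fromBlocks (circulant a * (circulant a)ᵀ + circulant b * (circulant b)ᵀ) 0
        0 (circulant a * (circulant a)ᵀ + circulant b * (circulant b)ᵀ) := by
  have hcomm (c d : G → R) : circulant c * (circulant d)ᵀ = (circulant d)ᵀ * circulant c := by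
    rw [transpose_circulant, circulant_mul_comm]
  rw [fourCirculant, fromBlocks_transpose, fromBlocks_multiply]
  simp only [transpose_neg, transpose_transpose, Matrix.neg_mul, Matrix.mul_neg, neg_neg,
    circulant_mul_comm b a, hcomm, ← transpose_mul, neg_add_cancel]
  rw [add_comm ((circulant b)ᵀ * _)]

theorem add_vecMulVec_mul_transpose {m n : Type*} [Fintype n] (C : Matrix m n R) {w : n → R}
    (hw : w ⬝ᵥ w = -2) :
    (C + vecMulVec (C *ᵥ w) w) * (C + vecMulVec (C *ᵥ w) w)ᵀ = C * Cᵀ := by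
  rw [transpose_add, transpose_vecMulVec, Matrix.add_mul, Matrix.mul_add, Matrix.mul_add,
    mul_vecMulVec, vecMulVec_mul, vecMul_transpose, vecMulVec_mul_vecMulVec, hw]
  rw [vecMulVec_smul, neg_smul, two_smul]
  abel

end OrthogonalMatrix

section BitSlicing

/-- The number with binary digits `l`, the least significant digit first. -/
def packBits (l : List Bool) : ℕ :=
  l.foldr Nat.bit 0

theorem packBits_cons (b : Bool) (l : List Bool) : packBits (b :: l) = Nat.bit b (packBits l) :=
  rfl

theorem testBit_packBits (l : List Bool) (i : ℕ) : (packBits l).testBit i = l.getD i false := by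
  induction l generalizing i with
  | nil => simp [packBits]
  | cons b l ih =>
    cases i with
    | zero => simp [packBits_cons]
    | succ i => simp [packBits_cons, Nat.testBit_bit_succ, ih]

theorem packBits_append (l l' : List Bool) :
    packBits (l ++ l') = packBits l + packBits l' <<< l.length := by
  induction l with
  | nil => simp [packBits]
  | cons b l ih =>
    simp only [List.cons_append, packBits_cons, ih, Nat.bit_val, List.length_cons,
      Nat.shiftLeft_eq, pow_succ]
    ring

theorem packBits_map_not {α : Type*} (p : α → Bool) (l : List α) :
    packBits (l.map fun a => !p a) = 2 ^ l.length - 1 - packBits (l.map p) := by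
  suffices packBits (l.map fun a => !p a) + packBits (l.map p) + 1 = 2 ^ l.length by omega
  induction l with
  | nil => rfl
  | cons a l ih =>
    simp only [List.map_cons, packBits_cons, Nat.bit_val, List.length_cons, pow_succ, ← ih]
    cases p a <;> simp only [Bool.not_true, Bool.not_false, Bool.toNat_true, Bool.toNat_false] <;>
      ring

/-- The number of binary digits `1` of `N < 2 ^ 2 ^ d`, computed by bisection because
it is applied to sparse numbers with millions of digits. -/
def popCount : ℕ → ℕ → ℕ
  | 0, N => N
  | d + 1, N => if N = 0 then 0 else popCount d (N % 2 ^ 2 ^ d) + popCount d (N >>> 2 ^ d)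

theorem packBits_mod_two_pow (l : List Bool) (k : ℕ) :
    packBits l % 2 ^ k = packBits (l.take k) := by
  refine Nat.eq_of_testBit_eq fun i => ?_
  simp only [Nat.testBit_mod_two_pow, testBit_packBits, List.getD_eq_getElem?_getD,
    List.getElem?_take]
  by_cases h : i < k <;> simp [h]

theorem packBits_shiftRight (l : List Bool) (k : ℕ) : packBits l >>> k = packBits (l.drop k) := by
  refine Nat.eq_of_testBit_eq fun i => ?_
  simp only [Nat.testBit_shiftRight, testBit_packBits, List.getD_eq_getElem?_getD,
    List.getElem?_drop]

theorem packBits_eq_zero {l : List Bool} : packBits l = 0 ↔ l.count true = 0 := by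
  induction l with
  | nil => simp [packBits]
  | cons b l ih => cases b <;> simp [packBits_cons, Nat.bit_val, ih]

theorem popCount_packBits {d : ℕ} {l : List Bool} (hl : l.length ≤ 2 ^ d) :
    popCount d (packBits l) = l.count true := by
  induction d generalizing l with
  | zero =>
    match l, hl with
    | [], _ => rfl
    | [b], _ => cases b <;> rfl
  | succ d ih =>
    have htake : (l.take (2 ^ d)).length ≤ 2 ^ d := List.length_take_le _ _
    have hdrop : (l.drop (2 ^ d)).length ≤ 2 ^ d := by
      rw [List.length_drop]
      omega
    rw [popCount, packBits_mod_two_pow, packBits_shiftRight, ih htake, ih hdrop,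
      ← List.count_append, List.take_append_drop]
    split_ifs with h
    · exact (packBits_eq_zero.1 h).symm
    · rfl

/-- The sums of `f` over the sublists of `l` of length `k`, packed one bit per sublist. -/
def packedSublistSums {α : Type*} (f : α → ZMod 2) (k : ℕ) (l : List α) : ℕ :=
  packBits ((l.sublistsLen k).map fun s => decide ((s.map f).sum ≠ 0))

theorem packedSublistSums_zero {α : Type*} (f : α → ZMod 2) (l : List α) :
    packedSublistSums f 0 l = 0 := by
  simp [packedSublistSums, packBits]

theorem packedSublistSums_succ_cons {α : Type*} (f : α → ZMod 2) (k : ℕ) (a : α) (l : List α) :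
    packedSublistSums f (k + 1) (a :: l) = packedSublistSums f (k + 1) l +
      (if f a = 0 then packedSublistSums f k l
        else 2 ^ l.length.choose k - 1 - packedSublistSums f k l) <<< l.length.choose (k + 1) := by
  have hsum (s : List α) : decide (((a :: s).map f).sum ≠ 0) =
      if f a = 0 then decide ((s.map f).sum ≠ 0) else !decide ((s.map f).sum ≠ 0) := by
    rw [List.map_cons, List.sum_cons]
    generalize f a = x
    generalize (s.map f).sum = y
    revert x y
    decide
  unfold packedSublistSums
  rw [List.sublistsLen_succ_cons, List.map_append, packBits_append, List.length_map,
    List.length_sublistsLen, List.map_map]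
  simp only [Function.comp_def, hsum]
  split_ifs with ha
  · rfl
  · rw [packBits_map_not, List.length_sublistsLen]

/-- The list of all pairs `(l.length.choose j, packedSublistSums f j l)` with `j ≤ k`, computed by
the recursion of Pascal's triangle. -/
def sublistSumTable {α : Type*} (f : α → ZMod 2) (k : ℕ) : List α → List (ℕ × ℕ)
  | [] => (1, 0) :: .replicate k (0, 0)
  | a :: l =>
    let T := sublistSumTable f k l
    (1, 0) :: T.tail.zipWith (fun p q =>
      (p.1 + q.1, p.2 + (if f a = 0 then q.2 else 2 ^ q.1 - 1 - q.2) <<< p.1)) T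

theorem sublistSumTable_eq_map {α : Type*} (f : α → ZMod 2) (k : ℕ) (l : List α) :
    sublistSumTable f k l =
      (List.range (k + 1)).map fun j => (l.length.choose j, packedSublistSums f j l) := by
  induction l with
  | nil =>
    refine List.ext_getElem (by simp [sublistSumTable]) fun i hi _ => ?_
    cases i <;> simp [sublistSumTable, packedSublistSums, packBits]
  | cons a l ih =>
    refine List.ext_getElem (by simp [sublistSumTable, ih]) fun i hi _ => ?_
    cases i with
    | zero => simp [sublistSumTable, packedSublistSums_zero]
    | succ i =>
      simp [sublistSumTable, ih, packedSublistSums_succ_cons, Nat.choose_succ_succ, add_comm]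

/-- The number in lane `i` of a list of bit planes, that is, the number whose `j`-th binary digit is
the `i`-th digit of the `j`-th plane. -/
def laneValue (ps : List ℕ) (i : ℕ) : ℕ :=
  packBits (ps.map (·.testBit i))

theorem laneValue_cons (p : ℕ) (ps : List ℕ) (i : ℕ) :
    laneValue (p :: ps) i = Nat.bit (p.testBit i) (laneValue ps i) :=
  rfl

/-- Adds the `i`-th binary digit of `c` to the number in lane `i`, for all `i` at once. -/
def addPlane : List ℕ → ℕ → List ℕ
  | [], c => if c = 0 then [] else [c]
  | p :: ps, c => (p ^^^ c) :: addPlane ps (p &&& c)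

theorem laneValue_addPlane (ps : List ℕ) (c i : ℕ) :
    laneValue (addPlane ps c) i = laneValue ps i + (c.testBit i).toNat := by
  induction ps generalizing c with
  | nil =>
    rw [addPlane]
    split_ifs with hc
    · simp [hc]
    · simp [laneValue, packBits, Nat.bit_val]
  | cons p ps ih =>
    simp only [addPlane, laneValue_cons, ih, Nat.testBit_xor, Nat.testBit_and, Nat.bit_val]
    cases p.testBit i <;> cases c.testBit i <;> grind

theorem laneValue_foldl_addPlane (cs ps : List ℕ) (i : ℕ) :
    laneValue (cs.foldl addPlane ps) i =
      laneValue ps i + (cs.map fun c => (c.testBit i).toNat).sum := by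
  induction cs generalizing ps with
  | nil => simp
  | cons c cs ih =>
    rw [List.foldl_cons, ih, laneValue_addPlane, List.map_cons, List.sum_cons, add_assoc]

/-- The bit mask of those among the first `N` lanes that contain the number `b`. -/
def laneEqMask (N : ℕ) : List ℕ → ℕ → ℕ
  | [], b => if b = 0 then 2 ^ N - 1 else 0
  | p :: ps, b => (if b % 2 = 1 then p else p ^^^ (2 ^ N - 1)) &&& laneEqMask N ps (b / 2)

theorem testBit_laneEqMask (N : ℕ) (ps : List ℕ) (b i : ℕ) :
    (laneEqMask N ps b).testBit i = decide (i < N ∧ laneValue ps i = b) := by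
  induction ps generalizing b with
  | nil =>
    by_cases hb : b = 0 <;>
      simp [laneEqMask, laneValue, packBits, Nat.testBit_two_pow_sub_one, hb, eq_comm]
  | cons p ps ih =>
    have hdigits : Nat.bit (p.testBit i) (laneValue ps i) = b ↔
        (p.testBit i = decide (b % 2 = 1)) ∧ laneValue ps i = b / 2 := by
      rw [Nat.bit_val]
      cases p.testBit i <;> grind
    simp only [laneEqMask, Nat.testBit_and, ih, laneValue_cons, hdigits]
    split_ifs with hb <;> by_cases hi : i < N <;>
      cases hp : p.testBit i <;>
      simp [Nat.testBit_two_pow_sub_one, hp, hi, hb]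

theorem laneEqMask_eq_packBits {α : Type*} {l : List α} {ps : List ℕ} {g : α → ℕ}
    (h : ∀ i (hi : i < l.length), laneValue ps i = g l[i]) (b : ℕ) :
    laneEqMask l.length ps b = packBits (l.map fun a => decide (g a = b)) := by
  refine Nat.eq_of_testBit_eq fun i => ?_
  rw [testBit_laneEqMask, testBit_packBits]
  by_cases hi : i < l.length
  · simp [hi, h]
  · simp [hi]

/-- Bit-sliced evaluation of `splitWeightCount`: bit `i` of the `j`-th plane is coordinate `j` of
the `i`-th sum of `k` rows of `A`, so that lane `i` of the sum of the planes is the weight of that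
sum. The binomial coefficient is written as a quotient because the recursion of `Nat.choose` is
exponential. -/
def slicedWeightCount {m n : ℕ} (A : Matrix (Fin m) (Fin n) (ZMod 2)) (k b : ℕ) : ℕ :=
  let N := m.descFactorial k / k.factorial
  let planes := (List.finRange n).map fun j =>
    ((sublistSumTable (A · j) k (List.finRange m)).getD k (0, 0)).2
  popCount (N.log2 + 1) (laneEqMask N (planes.foldl addPlane []) b)

theorem vecMul_eq_sum_support {m n : ℕ} (A : Matrix (Fin m) (Fin n) (ZMod 2)) (x : Fin m → ZMod 2) :
    x ᵥ* A = fun j => ∑ i with x i ≠ 0, A i j := by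
  have hmul (c a : ZMod 2) : c * a = if c ≠ 0 then a else 0 := by
    revert c a
    decide
  ext j
  rw [vecMul, dotProduct, sum_filter]
  exact sum_congr rfl fun i _ => hmul _ _

theorem splitWeightCount_eq_card_powersetCard {m n : ℕ} (A : Matrix (Fin m) (Fin n) (ZMod 2))
    (k b : ℕ) :
    splitWeightCount A k b =
      #{t ∈ powersetCard k univ | hammingNorm (fun j => ∑ i ∈ t, A i j) = b} := by
  have hsupport (t : Finset (Fin m)) :
      ({i | (if i ∈ t then (1 : ZMod 2) else 0) ≠ 0} : Finset (Fin m)) = t := by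
    simp
  refine card_nbij' (fun x => ({i | x i ≠ 0} : Finset (Fin m))) (fun t i => if i ∈ t then 1 else 0)
    ?_ ?_ ?_ fun t _ => hsupport t
  · intro x hx
    simpa [vecMul_eq_sum_support, hammingNorm] using hx
  · intro t ht
    simp only [coe_filter, mem_powersetCard_univ, Set.mem_ofPred_eq, mem_univ, true_and,
      vecMul_eq_sum_support, hsupport] at ht ⊢
    rwa [hammingNorm, hsupport]
  · intro x _
    have hindicator (c : ZMod 2) : (if c ≠ 0 then 1 else 0) = c := by
      revert c
      decide
    ext i
    simpa only [mem_filter, mem_univ, true_and] using hindicator (x i)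

theorem splitWeightCount_eq_countP_sublistsLen {m n : ℕ} (A : Matrix (Fin m) (Fin n) (ZMod 2))
    (k b : ℕ) :
    splitWeightCount A k b = ((List.finRange m).sublistsLen k).countP fun s =>
      hammingNorm (fun j => (s.map (A · j)).sum) = b := by
  have hval : (powersetCard k (univ : Finset (Fin m))).val.map Finset.val =
      (((List.finRange m).sublistsLen k).map Multiset.ofList : List (Multiset (Fin m))) :=
    (map_val_val_powersetCard _ _).trans (Multiset.powersetCard_coe k (List.finRange m))
  calc splitWeightCount A k b
      = ((powersetCard k univ).val.map Finset.val).countP fun t : Multiset (Fin m) =>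
          hammingNorm (fun j => (t.map (A · j)).sum) = b := by
        rw [splitWeightCount_eq_card_powersetCard, Multiset.countP_map]
        rfl
    _ = _ := by
        rw [hval, Multiset.coe_countP, List.countP_map]
        rfl

theorem splitWeightCount_eq_slicedWeightCount {m n : ℕ} (A : Matrix (Fin m) (Fin n) (ZMod 2))
    (k b : ℕ) : splitWeightCount A k b = slicedWeightCount A k b := by
  set L := (List.finRange m).sublistsLen k with hL
  have hlength : m.descFactorial k / k.factorial = L.length := by
    rw [← Nat.choose_eq_descFactorial_div_factorial, List.length_sublistsLen, List.length_finRange]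
  have hplane (j : Fin n) : ((sublistSumTable (A · j) k (List.finRange m)).getD k (0, 0)).2 =
      packedSublistSums (A · j) k (List.finRange m) := by
    simp [sublistSumTable_eq_map]
  have hlane (i : ℕ) (hi : i < L.length) :
      laneValue (((List.finRange n).map fun j =>
        packedSublistSums (A · j) k (List.finRange m)).foldl addPlane []) i =
      hammingNorm fun j => (L[i].map (A · j)).sum := by
    rw [laneValue_foldl_addPlane, hammingNorm, card_filter, Fin.sum_univ_def, List.map_map]
    refine (zero_add _).trans (congrArg List.sum (List.map_congr_left fun j _ => ?_))
    simp only [Function.comp_apply, packedSublistSums, testBit_packBits]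
    rw [List.getD_eq_getElem _ _ (by simpa [hL] using hi)]
    simp [hL, Bool.toNat, Bool.cond_decide]
  rw [splitWeightCount_eq_countP_sublistsLen, slicedWeightCount]
  simp only [hplane, hlength]
  rw [laneEqMask_eq_packBits (g := fun s => hammingNorm fun j => (s.map (A · j)).sum) hlane,
    popCount_packBits, List.count_eq_countP, List.countP_map]
  · simp only [Function.comp_def, beq_true, hL]
  · rw [List.length_map]
    exact Nat.lt_log2_self.le

end BitSlicing

section NeighborCode

/-- The first column of the upper left circulant block. -/
def circulantVector₁ : Fin 17 → ZMod 2 :=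
  ![0, 1, 0, 1, 1, 0, 1, 0, 1, 0, 0, 0, 1, 0, 0, 1, 1]

/-- The first column of the upper right circulant block. -/
def circulantVector₂ : Fin 17 → ZMod 2 :=
  ![0, 1, 0, 0, 1, 0, 1, 0, 0, 0, 0, 0, 0, 1, 0, 1, 0]

/-- The vector along which the four-circulant block is modified. -/
def neighborVector : Fin 17 ⊕ Fin 17 → ZMod 2 :=
  Sum.elim ![0, 0, 0, 0, 0, 0, 1, 1, 1, 1, 0, 1, 1, 0, 1, 0, 0]
    ![0, 0, 0, 1, 0, 1, 1, 0, 1, 1, 1, 1, 0, 0, 0, 0, 0]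

/-- The matrix `C (1 + w wᵀ)`, where `C` is the four-circulant block and `w` the neighbor vector,
expanded as `C + (C w) wᵀ` because this form is faster to evaluate. -/
def neighborBlock : Matrix (Fin 34) (Fin 34) (ZMod 2) :=
  reindex finSumFinEquiv finSumFinEquiv
    (fourCirculant circulantVector₁ circulantVector₂ +
      vecMulVec (fourCirculant circulantVector₁ circulantVector₂ *ᵥ neighborVector) neighborVector)

/-- The self-dual `[68, 34, 12]` code: a neighbor of the code generated by `[1 | C]`, with `C` the
four-circulant block, in the sense that the two codes intersect in codimension one. -/
def neighborCode : Submodule (ZMod 2) (Fin 68 → ZMod 2) :=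
  systematicCode neighborBlock

theorem fourCirculant_circulantVector_mul_transpose :
    fourCirculant circulantVector₁ circulantVector₂ *
      (fourCirculant circulantVector₁ circulantVector₂)ᵀ = 1 := by
  have hsum : circulant circulantVector₁ * (circulant circulantVector₁)ᵀ +
      circulant circulantVector₂ * (circulant circulantVector₂)ᵀ = 1 := by
    decide +kernel
  rw [fourCirculant_mul_transpose, hsum, fromBlocks_one]

theorem neighborVector_dotProduct_self : neighborVector ⬝ᵥ neighborVector = -2 := by
  decide +kernel

theorem neighborBlock_mul_transpose : neighborBlock * neighborBlockᵀ = 1 := by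
  rw [neighborBlock, reindex_apply, transpose_submatrix, submatrix_mul_equiv,
    add_vecMulVec_mul_transpose _ neighborVector_dotProduct_self,
    fourCirculant_circulantVector_mul_transpose, submatrix_one_equiv]

theorem isSelfDual_neighborCode : IsSelfDual neighborCode :=
  isSelfDual_systematicCode (neighborBlock_mul_transpose.trans (by decide))

/-- The number of codewords of weight `s` in `neighborCode`, for `s < 15`; the values at `12` and
`14` are `442 + 4 * β` and `14960 - 8 * β - 256 * γ` at `β = 208` and `γ = 0`. -/
def neighborCodeWeightCount : ℕ → ℕ
  | 0 => 1
  | 12 => 1274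
  | 14 => 13296
  | _ => 0

set_option maxRecDepth 100000 in
theorem sum_slicedWeightCount_neighborBlock :
    ∀ s < 15, ∑ k ∈ range (s / 2 + 1), slicedWeightCount neighborBlock k (s - k) +
        ∑ k ∈ range ((s + 1) / 2), slicedWeightCount neighborBlockᵀ k (s - k) =
      neighborCodeWeightCount s := by
  decide +kernel

theorem ncard_neighborCode_hammingNorm_eq {s : ℕ} (hs : s < 15) :
    {v | v ∈ neighborCode ∧ hammingNorm v = s}.ncard = neighborCodeWeightCount s := by
  rw [← sum_slicedWeightCount_neighborBlock s hs]
  simp only [← splitWeightCount_eq_slicedWeightCount]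
  exact ncard_systematicCode_hammingNorm_eq_of_mul_eq_one neighborBlock_mul_transpose s

theorem twelve_le_hammingNorm_of_mem_neighborCode {v : Fin 68 → ZMod 2} (hv : v ∈ neighborCode)
    (hv0 : v ≠ 0) : 12 ≤ hammingNorm v := by
  by_contra! hlt
  have hcount : ∀ s < 12, s ≠ 0 → neighborCodeWeightCount s = 0 := by
    decide
  have hempty : {u | u ∈ neighborCode ∧ hammingNorm u = hammingNorm v} = ∅ := by
    rw [← Set.ncard_eq_zero, ncard_neighborCode_hammingNorm_eq (by omega),
      hcount _ hlt (hammingNorm_ne_zero_iff.2 hv0)]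
  exact Set.eq_empty_iff_forall_notMem.1 hempty v ⟨hv, rfl⟩

theorem exists_mem_neighborCode_hammingNorm_eq_twelve :
    ∃ v ∈ neighborCode, hammingNorm v = 12 := by
  refine Set.nonempty_of_ncard_ne_zero (s := {v | v ∈ neighborCode ∧ hammingNorm v = 12}) ?_
  rw [ncard_neighborCode_hammingNorm_eq (by decide)]
  decide

end NeighborCode

/-- There exists a binary self-dual `[68, 34, 12]` code with weight enumerator
`W_{68,2}` (γ = 0, β = 208): minimum nonzero weight 12, exactly 1274 codewords of weight 12
and exactly 13296 codewords of weight 14. -/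
theorem exists_selfDual_68_18 :
    ∃ C : Submodule (ZMod 2) (Fin 68 → ZMod 2),
      IsSelfDual C ∧
      (∀ v ∈ C, v ≠ 0 → 12 ≤ hammingNorm v) ∧
      (∃ v ∈ C, hammingNorm v = 12) ∧
      {v | v ∈ C ∧ hammingNorm v = 12}.ncard = 1274 ∧
      {v | v ∈ C ∧ hammingNorm v = 14}.ncard = 13296 :=
  ⟨neighborCode, isSelfDual_neighborCode, fun _ => twelve_le_hammingNorm_of_mem_neighborCode,
    exists_mem_neighborCode_hammingNorm_eq_twelve,
    ncard_neighborCode_hammingNorm_eq (by decide), ncard_neighborCode_hammingNorm_eq (by decide)⟩
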